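/- Let w be a non-increasing positive function on I=(0,∞), and let f be measurable on I with finite decreasing rearrangement f* satisfying lim_{t→∞} f*(t) > 0. Then for every ε > 0 there exists a measurable v : I → (0,∞), strictly positive everywhere, with v* = w (a.e.) and such that the rearrangement of f/v with respect to v·dm satisfies (f/v)^{*,v}(t) ≤ (1+ε)·(f*/w)^{*,w}(t) for all t ∈ (0, ∫_I w dm), where (f*/w)^{*,w} is the rearrangement of f*/w with respect to w·dm. -/

import Mathlib

open MeasureTheory Set Filter
open scoped ENNReal

/-- The interval `(0, a)` for `a : ℝ≥0∞` (equals `(0,∞)` when `a = ∞`). -/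
def Iset (a : ℝ≥0∞) : Set ℝ := {x : ℝ | 0 < x ∧ ENNReal.ofReal x < a}

/-- Lebesgue measure restricted to the interval `(0,a)`. -/
noncomputable def volI (a : ℝ≥0∞) : Measure ℝ := volume.restrict (Iset a)

/-- Decreasing rearrangement of an `ℝ≥0∞`-valued function with respect to a measure `μ`:
`f^{*,μ}(t) = inf {s > 0 : μ({f > s}) ≤ t}`. -/
noncomputable def rearrE (μ : Measure ℝ) (f : ℝ → ℝ≥0∞) (t : ℝ) : ℝ≥0∞ :=
  sInf {s : ℝ≥0∞ | 0 < s ∧ μ {x | s < f x} ≤ ENNReal.ofReal t}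

/-- Decreasing rearrangement of a real function with respect to a measure `μ` on `ℝ`:
`f^{*,μ}(t) = inf {s > 0 : μ({|f| > s}) ≤ t}`. -/
noncomputable def rearr (μ : Measure ℝ) (f : ℝ → ℝ) (t : ℝ) : ℝ≥0∞ :=
  rearrE μ (fun x => ENNReal.ofReal |f x|) t

/-- The measure `w·dm` on the set `I`. -/
noncomputable def wMeas (I : Set ℝ) (w : ℝ → ℝ) : Measure ℝ :=
  (volume.restrict I).withDensity (fun t => ENNReal.ofReal (w t))

/-- `W(t) = ∫₀ᵗ w dm`. -/
noncomputable def Wfun (w : ℝ → ℝ) (t : ℝ) : ℝ := ∫ s in Set.Ioo (0:ℝ) t, w s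

/-- `b = ∫_I w dm` as an extended real number. -/
noncomputable def bval (a : ℝ≥0∞) (w : ℝ → ℝ) : ℝ≥0∞ := ∫⁻ x in Iset a, ENNReal.ofReal (w x)

/-!
Round `|f|` down to a geometric scale starting at `α = inf f* > 0`: a point `x` has level
`N x = n` when `α(1+ε)ⁿ < |f x| ≤ α(1+ε)ⁿ⁺¹`, and level `0` when `|f x| ≤ α(1+ε)`. Order the
interval lexicographically, by decreasing level and then by position. Since `α` is the infimum of
`f*`, the levels above `0` have finite total measure, so every initial segment of this order has
finite measure, and `τ x`, the measure of the points up to `x`, is a measure preserving map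
of the interval to itself. A point of level `n ≥ 1` has `τ x < m{|f| > α(1+ε)ⁿ}`, that is
`f*(τ x) > α(1+ε)ⁿ`, while `f* ≥ α` takes care of level `0`; hence `|f| ≤ (1+ε) f* ∘ τ`. The
weight is `v = w ∘ τ`: then `v* = w*`, and `|f/v| ≤ (1+ε) (f*/w) ∘ τ`, where `τ` carries `v·dm`
to `w·dm`.
-/

open scoped Topology

section Interval

variable {a : ℝ≥0∞}

lemma Iset_top : Iset ⊤ = Ioi 0 := by
  ext x
  simp [Iset]

lemma Iset_of_ne_top (ha : a ≠ ⊤) : Iset a = Ioo 0 a.toReal := by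
  ext x
  exact and_congr_right fun hx => ENNReal.ofReal_lt_iff_lt_toReal hx.le ha

lemma isOpen_Iset : IsOpen (Iset a) :=
  isOpen_Ioi.inter (isOpen_Iio.preimage ENNReal.continuous_ofReal)

lemma volI_univ : volI a univ = a := by
  rcases eq_or_ne a ⊤ with rfl | ha
  · simp [volI, Iset_top]
  · simp [volI, Iset_of_ne_top ha, ha]

lemma volI_Iic (t : ℝ) : volI a (Iic t) = min (ENNReal.ofReal t) a := by
  rw [volI, Measure.restrict_apply measurableSet_Iic]
  rcases lt_or_ge (ENNReal.ofReal t) a with ht | ht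
  · have : Iic t ∩ Iset a = Ioc 0 t := by
      ext x
      exact ⟨fun h => ⟨h.2.1, h.1⟩,
        fun h => ⟨h.2, h.1, (ENNReal.ofReal_le_ofReal h.2).trans_lt ht⟩⟩
    rw [this, Real.volume_Ioc, sub_zero, min_eq_left ht.le]
  · have : Iset a ⊆ Iic t := fun x hx =>
      ((ENNReal.ofReal_lt_ofReal_iff_of_nonneg hx.1.le).1 (hx.2.trans_le ht)).le
    rw [inter_eq_right.2 this, min_eq_right ht, ← Measure.restrict_apply_univ]
    exact volI_univ

lemma volI_Iic_ne_top (t : ℝ) : volI a (Iic t) ≠ ∞ := by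
  rw [volI_Iic]
  exact ne_top_of_le_ne_top ENNReal.ofReal_ne_top (min_le_left _ _)

instance : NullSingletonClass (volI a) :=
  inferInstanceAs (NullSingletonClass (volume.restrict (Iset a)))

lemma ae_mem_Iset : ∀ᵐ x ∂volI a, x ∈ Iset a :=
  ae_restrict_mem isOpen_Iset.measurableSet

end Interval

section DistributionFunction

lemma measure_ext_of_Iic {X : Type*} [TopologicalSpace X] [MeasurableSpace X]
    [SecondCountableTopology X] [LinearOrder X] [OrderTopology X] [BorelSpace X] [NoMinOrder X]
    {μ ν : Measure X} (hμ : ∀ t, μ (Iic t) ≠ ∞) (h : ∀ t, μ (Iic t) = ν (Iic t)) : μ = ν := by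
  refine Measure.ext_of_Ioc' μ ν (fun s t _ => measure_ne_top_of_subset Ioc_subset_Iic_self (hμ t))
    fun s t hst => ?_
  have hsub : Iic s ⊆ Iic t := Iic_subset_Iic.2 hst.le
  have hmeas : NullMeasurableSet (Iic s) ν := measurableSet_Iic.nullMeasurableSet
  rw [← Iic_sdiff_Iic, measure_sdiff hsub measurableSet_Iic.nullMeasurableSet (hμ s),
    measure_sdiff hsub hmeas (h s ▸ hμ s), h, h]

variable {μ : Measure ℝ}

lemma tendsto_measure_Iic_atBot_zero (hμ : ∃ x, μ (Iic x) ≠ ∞) :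
    Tendsto (fun x => μ (Iic x)) atBot (𝓝 0) := by
  have hinter : ⋂ x : ℝ, Iic x = ∅ := iInter_Iic_eq_empty_iff.2 (by simp [not_bddBelow_univ])
  rw [← measure_empty (μ := μ), ← hinter]
  exact tendsto_measure_iInter_atBot (fun x => measurableSet_Iic.nullMeasurableSet) monotone_Iic hμ

variable [NullSingletonClass μ]

lemma continuous_measure_Iic (hμ : ∀ x, μ (Iic x) ≠ ∞) : Continuous fun x => μ (Iic x) := by
  have hint (x : ℝ) : IntegrableOn (fun _ => (1 : ℝ)) (Iic x) μ :=
    integrableOn_const (hμ x)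
  have hprim : (fun x => μ (Iic x)) =
      fun x => ENNReal.ofReal ((∫ _ in (0 : ℝ)..x, (1 : ℝ) ∂μ) + μ.real (Iic 0)) := by
    ext x
    rw [← intervalIntegral.integral_Iic_sub_Iic (hint 0) (hint x)]
    simp [Measure.real, ENNReal.ofReal_toReal (hμ x)]
  rw [hprim]
  refine ENNReal.continuous_ofReal.comp (.add ?_ continuous_const)
  exact intervalIntegral.continuous_primitive
    (fun s t => ⟨(hint t).mono_set Ioc_subset_Iic_self, (hint s).mono_set Ioc_subset_Iic_self⟩) 0

lemma measure_setOf_measure_Iic_le (hμ : ∀ x, μ (Iic x) ≠ ∞) (c : ℝ≥0∞) :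
    μ {x | μ (Iic x) ≤ c} = min c (μ univ) := by
  have hmono : Monotone fun x => μ (Iic x) := fun x y hxy => measure_mono (Iic_subset_Iic.2 hxy)
  rcases le_or_gt (μ univ) c with hc | hc
  · have huniv : {x | μ (Iic x) ≤ c} = univ :=
      eq_univ_of_forall fun x => (measure_mono (subset_univ _)).trans hc
    rw [min_eq_right hc, huniv]
  set S : Set ℝ := {x | μ (Iic x) ≤ c}
  have hexceed : ∃ x, c < μ (Iic x) :=
    ((tendsto_measure_Iic_atTop μ).eventually (lt_mem_nhds hc)).exists
  rw [min_eq_left hc.le]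
  rcases S.eq_empty_or_nonempty with hS | hS
  · have hlt (x : ℝ) : c < μ (Iic x) := not_le.1 fun h => (hS ▸ h : x ∈ (∅ : Set ℝ))
    have hc_nonpos : c ≤ 0 :=
      ge_of_tendsto' (tendsto_measure_Iic_atBot_zero ⟨0, hμ 0⟩) fun x => (hlt x).le
    rw [hS, measure_empty, nonpos_iff_eq_zero.1 hc_nonpos]
  · have hbdd : BddAbove S := by
      obtain ⟨x₁, hx₁⟩ := hexceed
      exact ⟨x₁, fun y (hy : μ (Iic y) ≤ c) => (hmono.reflect_lt (hy.trans_lt hx₁)).le⟩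
    have hclosed : IsClosed S := isClosed_le (continuous_measure_Iic hμ) continuous_const
    have hmax : sSup S ∈ S := hclosed.csSup_mem hS hbdd
    have hSeq : S = Iic (sSup S) :=
      Subset.antisymm (fun y hy => le_csSup hbdd hy) fun y hy => (hmono hy).trans hmax
    obtain ⟨z, hz⟩ : ∃ z, μ (Iic z) = c := mem_range_of_exists_le_of_exists_ge
      (continuous_measure_Iic hμ) hS (hexceed.imp fun _ h => h.le)
    rw [hSeq]
    exact le_antisymm hmax (hz ▸ hmono (le_csSup hbdd hz.le))

lemma measurePreserving_measureReal_Iic (hμ : ∀ x, μ (Iic x) ≠ ∞) :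
    MeasurePreserving (fun x => μ.real (Iic x)) μ (volI (μ univ)) := by
  have hmeas : Measurable fun x => μ.real (Iic x) :=
    (continuous_measure_Iic hμ).measurable.ennreal_toReal
  have hlaw (t : ℝ) : volI (μ univ) (Iic t) = μ.map (fun x => μ.real (Iic x)) (Iic t) := by
    rw [volI_Iic, Measure.map_apply hmeas measurableSet_Iic]
    rcases lt_or_ge t 0 with ht | ht
    · have hempty : (fun x => μ.real (Iic x)) ⁻¹' Iic t = ∅ :=
        eq_empty_of_forall_notMem fun x hx => (ht.trans_le measureReal_nonneg).not_ge hx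
      simp [hempty, ENNReal.ofReal_of_nonpos ht.le]
    · rw [← measure_setOf_measure_Iic_le hμ]
      congr 1
      ext x
      exact ENNReal.le_ofReal_iff_toReal_le (hμ x) ht
  exact ⟨hmeas, (measure_ext_of_Iic volI_Iic_ne_top hlaw).symm⟩

end DistributionFunction

section Rearrangement

variable {μ ν : Measure ℝ} {f g : ℝ → ℝ≥0∞} {t : ℝ} {s c : ℝ≥0∞}

lemma rearrE_le_iff : rearrE μ f t ≤ s ↔ μ {x | s < f x} ≤ ENNReal.ofReal t := by
  constructor
  · intro h
    rcases eq_or_ne s ∞ with rfl | hs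
    · simp
    obtain ⟨u, hu_anti, hsu, hu⟩ := exists_seq_strictAnti_tendsto' hs.lt_top
    have hmono : Monotone fun n => {x | u n < f x} := fun m n hmn x hx =>
      (hu_anti.antitone hmn).trans_lt hx
    have hunion : {x | s < f x} ⊆ ⋃ n, {x | u n < f x} := fun x (hx : s < f x) =>
      mem_iUnion.2 (hu.eventually (gt_mem_nhds hx)).exists
    refine (measure_mono hunion).trans (hmono.measure_iUnion.trans_le (iSup_le fun n => ?_))
    obtain ⟨r, ⟨-, hr⟩, hrn⟩ := sInf_lt_iff.1 (h.trans_lt (hsu n).1)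
    exact (measure_mono fun x hx => hrn.trans hx).trans hr
  · intro h
    refine le_of_forall_gt_imp_ge_of_dense fun r hr => ?_
    have hr_mem : r ∈ {s : ℝ≥0∞ | 0 < s ∧ μ {x | s < f x} ≤ ENNReal.ofReal t} :=
      ⟨zero_le.trans_lt hr, (measure_mono fun x hx => lt_trans hr hx).trans h⟩
    exact sInf_le hr_mem

lemma lt_rearrE_iff : s < rearrE μ f t ↔ ENNReal.ofReal t < μ {x | s < f x} :=
  lt_iff_lt_of_le_iff_le rearrE_le_iff

lemma measure_rearrE_lt_le : μ {x | rearrE μ f t < f x} ≤ ENNReal.ofReal t :=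
  rearrE_le_iff.1 le_rfl

lemma rearrE_antitone : Antitone (rearrE μ f) := fun _ _ hab =>
  rearrE_le_iff.2 (measure_rearrE_lt_le.trans (ENNReal.ofReal_le_ofReal hab))

lemma rearrE_mono_ae (h : f ≤ᵐ[μ] g) : rearrE μ f t ≤ rearrE μ g t := by
  refine rearrE_le_iff.2 (le_trans (measure_mono_ae ?_) (measure_rearrE_lt_le (f := g)))
  filter_upwards [h] with x hx hlt using lt_of_lt_of_le hlt hx

lemma rearrE_congr_ae (h : f =ᵐ[μ] g) : rearrE μ f t = rearrE μ g t :=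
  (rearrE_mono_ae h.le).antisymm (rearrE_mono_ae h.symm.le)

lemma rearrE_const_mul (hc₀ : c ≠ 0) (hc : c ≠ ∞) :
    rearrE μ (fun x => c * f x) t = c * rearrE μ f t := by
  refine eq_of_forall_ge_iff fun s => ?_
  have hlevel : {x | s < c * f x} = {x | s / c < f x} := by
    ext x
    rw [mem_ofPred_eq, mem_ofPred_eq, ENNReal.div_lt_iff (.inl hc₀) (.inl hc), mul_comm]
  rw [rearrE_le_iff, hlevel, ← rearrE_le_iff, ENNReal.le_div_iff_mul_le (.inl hc₀) (.inl hc),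
    mul_comm]

lemma rearrE_comp {τ : ℝ → ℝ} (hτ : MeasurePreserving τ μ ν) (hg : Measurable g) :
    rearrE μ (g ∘ τ) t = rearrE ν g t := by
  refine eq_of_forall_ge_iff fun s => ?_
  have hlevel : μ {x | s < (g ∘ τ) x} = ν {y | s < g y} :=
    hτ.measure_preimage (measurableSet_lt measurable_const hg).nullMeasurableSet
  rw [rearrE_le_iff, rearrE_le_iff, hlevel]

lemma rearr_eq_of_antitoneOn {a : ℝ≥0∞} {w : ℝ → ℝ} (hw_nonneg : ∀ x ∈ Iset a, 0 ≤ w x)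
    (hw : AntitoneOn w (Iset a)) (ht : t ∈ Iset a) (hcont : ContinuousAt w t) :
    rearr (volI a) w t = ENNReal.ofReal (w t) := by
  have happly (p : ℝ → Prop) : volI a {x | p x} = volume ({x | p x} ∩ Iset a) :=
    Measure.restrict_apply' isOpen_Iset.measurableSet
  apply le_antisymm
  · refine rearrE_le_iff.2 ?_
    have hsub : {x | ENNReal.ofReal (w t) < ENNReal.ofReal |w x|} ∩ Iset a ⊆ Ioo 0 t := by
      rintro x ⟨hx : ENNReal.ofReal (w t) < ENNReal.ofReal |w x|, hxI⟩
      rw [abs_of_nonneg (hw_nonneg x hxI),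
        ENNReal.ofReal_lt_ofReal_iff_of_nonneg (hw_nonneg t ht)] at hx
      exact ⟨hxI.1, hw.reflect_lt ht hxI hx⟩
    rw [happly]
    exact (measure_mono hsub).trans (by simp)
  · refine le_of_forall_lt fun s hs => lt_rearrE_iff.2 ?_
    have hnear : ∀ᶠ y in 𝓝 t, s < ENNReal.ofReal (w y) ∧ y ∈ Iset a :=
      ((ENNReal.continuous_ofReal.continuousAt.comp hcont).eventually (lt_mem_nhds hs)).and
        (isOpen_Iset.mem_nhds ht)
    obtain ⟨y, ⟨hsy, hyI⟩, hty⟩ :=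
      ((hnear.filter_mono nhdsWithin_le_nhds).and (self_mem_nhdsWithin (s := Ioi t))).exists
    have hsub : Ioc 0 y ⊆ {x | s < ENNReal.ofReal |w x|} ∩ Iset a := by
      intro x hx
      have hxI : x ∈ Iset a := ⟨hx.1, (ENNReal.ofReal_le_ofReal hx.2).trans_lt hyI.2⟩
      refine ⟨hsy.trans_le (ENNReal.ofReal_le_ofReal ?_), hxI⟩
      exact (hw hxI hyI hx.2).trans (le_abs_self _)
    calc ENNReal.ofReal t < ENNReal.ofReal y :=
          (ENNReal.ofReal_lt_ofReal_iff_of_nonneg ht.1.le).2 hty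
      _ = volume (Ioc 0 y) := by simp
      _ ≤ _ := by rw [happly]; exact measure_mono hsub

lemma rearr_ae_eq_of_antitoneOn {a : ℝ≥0∞} {w : ℝ → ℝ} (hw_nonneg : ∀ x ∈ Iset a, 0 ≤ w x)
    (hw : AntitoneOn w (Iset a)) :
    ∀ᵐ t ∂volI a, rearr (volI a) w t = ENNReal.ofReal (w t) := by
  filter_upwards [hw.countable_not_continuousWithinAt.ae_notMem (volI a), ae_mem_Iset] with t ht htI
  have hcont : ContinuousWithinAt w (Iset a) t := by_contra fun h => ht ⟨htI, h⟩
  exact rearr_eq_of_antitoneOn hw_nonneg hw htI (hcont.continuousAt (isOpen_Iset.mem_nhds htI))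

lemma measurePreserving_wMeas {I J : Set ℝ} {τ w : ℝ → ℝ}
    (hτ : MeasurePreserving τ (volume.restrict I) (volume.restrict J)) (hw : Measurable w) :
    MeasurePreserving τ (wMeas I (w ∘ τ)) (wMeas J w) := by
  refine ⟨hτ.measurable, Measure.ext fun A hA => ?_⟩
  rw [Measure.map_apply hτ.measurable hA, wMeas, wMeas,
    withDensity_apply _ (hτ.measurable hA), withDensity_apply _ hA]
  exact hτ.setLIntegral_comp_preimage hA hw.ennreal_ofReal

end Rearrangement

section LevelMap

lemma exists_measurable_nat_lt_iff {X β : Type*} [MeasurableSpace X] [LinearOrder β]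
    [TopologicalSpace β] [OrderClosedTopology β] [MeasurableSpace β] [OpensMeasurableSpace β]
    {g : X → β} (hg : Measurable g) {b : ℕ → β} (hb : Monotone b) (hgb : ∀ x, ∃ n, g x ≤ b n) :
    ∃ N : X → ℕ, Measurable N ∧ ∀ n x, n < N x ↔ b n < g x := by
  refine ⟨fun x => Nat.find (hgb x), measurable_find hgb fun n => hg measurableSet_Iic,
    fun n x => ?_⟩
  simp only [Nat.lt_find_iff, not_le]
  exact ⟨fun h => h n le_rfl, fun h m hmn => (hb hmn).trans_lt h⟩

/-- Encodes the pair `(N x, x)` by a single real number whose order is lexicographic: larger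
values of `N` come first, and points of equal level keep their order. The map
`x ↦ (1 + exp x)⁻¹` squeezes the position into `(0, 1)`, the gap between two levels. -/
noncomputable def levelKey (N : ℝ → ℕ) (x : ℝ) : ℝ := (N x + (1 + Real.exp x)⁻¹)⁻¹

variable {N : ℝ → ℕ}

lemma inv_one_add_exp_mem_Ioo (x : ℝ) : (1 + Real.exp x)⁻¹ ∈ Ioo (0 : ℝ) 1 :=
  ⟨by positivity, inv_lt_one_of_one_lt₀ (lt_add_of_pos_right 1 (Real.exp_pos x))⟩

lemma measurable_levelKey (hN : Measurable N) : Measurable (levelKey N) :=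
  ((measurable_from_nat.comp hN).add (Real.measurable_exp.const_add 1).inv).inv

lemma levelKey_injective : Function.Injective (levelKey N) := by
  intro x y hxy
  have hkey : N x + (1 + Real.exp x)⁻¹ = N y + (1 + Real.exp y)⁻¹ := inv_injective hxy
  have hfloor (z : ℝ) : ⌊N z + (1 + Real.exp z)⁻¹⌋₊ = N z := by
    obtain ⟨hz_pos, hz_lt_one⟩ := inv_one_add_exp_mem_Ioo z
    exact (Nat.floor_eq_iff (by positivity)).2 ⟨by linarith, by linarith⟩
  have hN : N x = N y := by rw [← hfloor x, hkey, hfloor]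
  simpa [hN] using hkey

lemma le_of_levelKey_le {x y : ℝ} (h : levelKey N y ≤ levelKey N x) : N x ≤ N y := by
  have hx_pos := (inv_one_add_exp_mem_Ioo x).1
  have hy_lt_one := (inv_one_add_exp_mem_Ioo y).2
  have hkey := (inv_le_inv₀ (by positivity) (by positivity)).1 h
  have hlt : (N x : ℝ) < N y + 1 := by linarith
  exact Nat.lt_succ_iff.1 (by exact_mod_cast hlt)

lemma le_levelKey {x : ℝ} (hx : N x = 0) : x ≤ levelKey N x := by
  simp only [levelKey, hx, Nat.cast_zero, zero_add, inv_inv]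
  linarith [Real.add_one_le_exp x]

lemma exists_measurePreserving_lt_measure_level {μ : Measure ℝ} [NullSingletonClass μ]
    (hμ : ∀ x, μ (Iic x) ≠ ∞) (hN : Measurable N) (hN_fin : μ {x | N x ≠ 0} ≠ ∞) :
    ∃ τ, MeasurePreserving τ μ (volI (μ univ)) ∧
      ∀ᵐ x ∂μ, ENNReal.ofReal (τ x) < μ {y | N x ≤ N y} := by
  have hκ := measurable_levelKey hN
  have hκ_Iic (z : ℝ) : μ.map (levelKey N) (Iic z) = μ {y | levelKey N y ≤ z} :=
    Measure.map_apply hκ measurableSet_Iic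
  have hκ_fin (z : ℝ) : μ.map (levelKey N) (Iic z) ≠ ∞ := by
    have hsub : {y | levelKey N y ≤ z} ⊆ Iic z ∪ {y | N y ≠ 0} := fun y hy =>
      (ne_or_eq (N y) 0).symm.imp_left fun h => (le_levelKey h).trans hy
    rw [hκ_Iic]
    exact measure_ne_top_of_subset hsub (measure_union_ne_top (hμ z) hN_fin)
  have hκ_null : NullSingletonClass (μ.map (levelKey N)) := ⟨fun z => by
    rw [Measure.map_apply hκ (measurableSet_singleton z)]
    exact (subsingleton_singleton.preimage levelKey_injective).measure_zero μ⟩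
  have hτ := (measurePreserving_measureReal_Iic hκ_fin).comp (hκ.measurePreserving μ)
  rw [Measure.map_apply hκ .univ, preimage_univ] at hτ
  -- Only countably many values are excluded, and `volI` has no atoms.
  have hne : ∀ᵐ x ∂μ, ∀ n, (μ.map (levelKey N)).real (Iic (levelKey N x)) ≠
      (μ {y | n ≤ N y}).toReal :=
    ae_all_iff.2 fun n => hτ.quasiMeasurePreserving.ae (Measure.ae_ne _ _)
  refine ⟨_, hτ, ?_⟩
  filter_upwards [hne] with x hx
  have hle : μ.map (levelKey N) (Iic (levelKey N x)) ≤ μ {y | N x ≤ N y} := by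
    rw [hκ_Iic]
    exact measure_mono fun y => le_of_levelKey_le
  rw [Function.comp_apply, Measure.real, ENNReal.ofReal_toReal (hκ_fin _)]
  exact hle.lt_of_ne fun h => hx (N x) (congrArg ENNReal.toReal h)

lemma exists_measurePreserving_le_mul_rearrE_of_lt {μ : Measure ℝ} [NullSingletonClass μ]
    (hμ : ∀ x, μ (Iic x) ≠ ∞) {g : ℝ → ℝ≥0∞} (hg : Measurable g) (hg_fin : ∀ x, g x ≠ ∞)
    {α c : ℝ≥0∞} (hα : α ≠ 0) (hα_le : ∀ t ∈ Iset (μ univ), α ≤ rearrE μ g t) (hc : 1 < c)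
    (hαc : ∃ t, rearrE μ g t < α * c) :
    ∃ τ, MeasurePreserving τ μ (volI (μ univ)) ∧ ∀ᵐ x ∂μ, g x ≤ c * rearrE μ g (τ x) := by
  have hlevel_mono : Monotone fun n : ℕ => α * c ^ (n + 1) := fun m n hmn => by
    dsimp only
    gcongr
    exact hc.le
  have hlevel_tendsto : Tendsto (fun n : ℕ => α * c ^ (n + 1)) atTop (𝓝 ∞) := by
    have hpow := (ENNReal.tendsto_pow_atTop_nhds_top_iff.2 hc).comp (tendsto_add_atTop_nat 1)
    simpa [Function.comp_def, ENNReal.mul_top hα] using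
      ENNReal.Tendsto.const_mul (a := α) hpow (.inl ENNReal.top_ne_zero)
  obtain ⟨N, hN, hN_lt⟩ := exists_measurable_nat_lt_iff hg hlevel_mono fun x =>
    (hlevel_tendsto.eventually (lt_mem_nhds (hg_fin x).lt_top)).exists.imp fun _ h => h.le
  have hN_fin : μ {x | N x ≠ 0} ≠ ∞ := by
    obtain ⟨t, ht⟩ := hαc
    have hlevel : {x | N x ≠ 0} = {x | α * c < g x} := by
      ext x
      simpa [pos_iff_ne_zero] using hN_lt 0 x
    rw [hlevel]
    exact ne_top_of_le_ne_top ENNReal.ofReal_ne_top (rearrE_le_iff.1 ht.le)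
  obtain ⟨τ, hτ, hτN⟩ := exists_measurePreserving_lt_measure_level hμ hN hN_fin
  refine ⟨τ, hτ, ?_⟩
  filter_upwards [hτN, hτ.quasiMeasurePreserving.ae ae_mem_Iset] with x hx hxI
  have hlower : α * c ^ N x ≤ rearrE μ g (τ x) := by
    rcases hk : N x with _ | k
    · simpa using hα_le _ hxI
    · have hlevel : {y | N x ≤ N y} = {y | α * c ^ (k + 1) < g y} := by
        ext y
        rw [hk]
        exact hN_lt k y
      exact (lt_rearrE_iff.2 (hlevel ▸ hx)).le
  calc g x ≤ α * c ^ (N x + 1) := not_lt.1 fun h => lt_irrefl _ ((hN_lt _ x).2 h)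
    _ = c * (α * c ^ N x) := by ring
    _ ≤ c * rearrE μ g (τ x) := by gcongr

lemma exists_measurePreserving_le_mul_rearrE {μ : Measure ℝ} [NullSingletonClass μ]
    (hμ : ∀ x, μ (Iic x) ≠ ∞) {g : ℝ → ℝ≥0∞} (hg : Measurable g) (hg_fin : ∀ x, g x ≠ ∞)
    {β c : ℝ≥0∞} (hβ : 0 < β) (hβ_le : ∀ t ∈ Iset (μ univ), β ≤ rearrE μ g t) (hc : 1 < c) :
    ∃ τ, MeasurePreserving τ μ (volI (μ univ)) ∧ ∀ᵐ x ∂μ, g x ≤ c * rearrE μ g (τ x) := by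
  set α : ℝ≥0∞ := ⨅ t ∈ Iset (μ univ), rearrE μ g t
  have hα : α ≠ 0 := (hβ.trans_le (le_iInf₂ hβ_le)).ne'
  have hα_le (t : ℝ) (ht : t ∈ Iset (μ univ)) : α ≤ rearrE μ g t := iInf₂_le t ht
  rcases eq_or_ne α ∞ with hα_top | hα_top
  · have hτ := measurePreserving_measureReal_Iic hμ
    refine ⟨_, hτ, ?_⟩
    filter_upwards [hτ.quasiMeasurePreserving.ae ae_mem_Iset] with x hx
    have htop : rearrE μ g (μ.real (Iic x)) = ∞ := top_le_iff.1 (hα_top ▸ hα_le _ hx)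
    rw [htop, ENNReal.mul_top (zero_lt_one.trans hc).ne']
    exact le_top
  · have hα_lt : α < α * c := by
      simpa using ENNReal.mul_lt_mul_right hα hα_top hc
    obtain ⟨t, ht⟩ := iInf_lt_iff.1 hα_lt
    obtain ⟨-, ht⟩ := iInf_lt_iff.1 ht
    exact exists_measurePreserving_le_mul_rearrE_of_lt hμ hg hg_fin hα hα_le hc ⟨t, ht⟩

end LevelMap

section WeightedRearrangement

lemma exists_measurable_pos_ae_eq {X : Type*} [MeasurableSpace X] {μ : Measure X} {u : X → ℝ}
    (hu : Measurable u) (hu_pos : ∀ᵐ x ∂μ, 0 < u x) :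
    ∃ v, Measurable v ∧ (∀ x, 0 < v x) ∧ v =ᵐ[μ] u := by
  refine ⟨fun x => if 0 < u x then u x else 1,
    .ite (measurableSet_lt measurable_const hu) hu measurable_const, fun x => ?_, ?_⟩
  · dsimp only
    split_ifs with hx
    exacts [hx, one_pos]
  · filter_upwards [hu_pos] with x hx using if_pos hx

variable {v w f τ : ℝ → ℝ} {t : ℝ}

lemma rearr_eq_of_ae_eq_comp {μ ν : Measure ℝ} (hτ : MeasurePreserving τ μ ν) (hw : Measurable w)
    (hv : v =ᵐ[μ] w ∘ τ) : rearr μ v t = rearr ν w t := by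
  rw [rearr, rearr, ← rearrE_comp hτ hw.abs.ennreal_ofReal]
  refine rearrE_congr_ae ?_
  filter_upwards [hv] with x hx
  simp only [hx, Function.comp_apply]

lemma rearr_div_wMeas_le {I J : Set ℝ} {c : ℝ≥0∞} (hc₀ : c ≠ 0) (hc : c ≠ ∞)
    {h : ℝ → ℝ≥0∞} (hh : Measurable h)
    (hτ : MeasurePreserving τ (volume.restrict I) (volume.restrict J)) (hw : Measurable w)
    (hv : v =ᵐ[volume.restrict I] w ∘ τ) (hv_pos : ∀ x, 0 < v x)
    (hfh : ∀ᵐ x ∂volume.restrict I, ENNReal.ofReal |f x| ≤ c * h (τ x)) :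
    rearr (wMeas I v) (fun y => f y / v y) t
      ≤ c * rearrE (wMeas J w) (fun s => h s / ENNReal.ofReal (w s)) t := by
  set φ : ℝ → ℝ≥0∞ := fun s => h s / ENNReal.ofReal (w s)
  have hφ : Measurable φ := hh.div hw.ennreal_ofReal
  have hwMeas : wMeas I v = wMeas I (w ∘ τ) :=
    withDensity_congr_ae (hv.fun_comp ENNReal.ofReal)
  have hpointwise : ∀ᵐ x ∂volume.restrict I, ENNReal.ofReal |f x / v x| ≤ c * (φ ∘ τ) x := by
    filter_upwards [hv, hfh] with x hvx hfx
    calc ENNReal.ofReal |f x / v x| = ENNReal.ofReal |f x| / ENNReal.ofReal (w (τ x)) := by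
          rw [abs_div, abs_of_pos (hv_pos x), ENNReal.ofReal_div_of_pos (hv_pos x), hvx,
            Function.comp_apply]
      _ ≤ c * h (τ x) / ENNReal.ofReal (w (τ x)) := ENNReal.div_le_div_right hfx _
      _ = c * (φ ∘ τ) x := mul_div_assoc _ _ _
  calc rearr (wMeas I v) (fun y => f y / v y) t
      ≤ rearrE (wMeas I (w ∘ τ)) (fun x => c * (φ ∘ τ) x) t := by
        rw [rearr, hwMeas]
        exact rearrE_mono_ae (withDensity_absolutelyContinuous _ _ hpointwise)
    _ = c * rearrE (wMeas I (w ∘ τ)) (φ ∘ τ) t := rearrE_const_mul hc₀ hc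
    _ = c * rearrE (wMeas J w) φ t := by
        rw [rearrE_comp (measurePreserving_wMeas hτ hw) hφ]

end WeightedRearrangement

theorem stmt_7_general {a : ℝ≥0∞} {w f : ℝ → ℝ} (hw_pos : ∀ x ∈ Iset a, 0 < w x)
    (hw_meas : Measurable w) (hf_meas : Measurable f) {β : ℝ≥0∞} (hβ : 0 < β)
    (hβ_le : ∀ t ∈ Iset a, β ≤ rearr (volI a) f t) {ε : ℝ} (hε : 0 < ε) :
    ∃ v : ℝ → ℝ, Measurable v ∧ (∀ x, 0 < v x) ∧
      (∀ t, rearr (volI a) v t = rearr (volI a) w t) ∧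
      ∀ t, rearr (wMeas (Iset a) v) (fun y => f y / v y) t
        ≤ ENNReal.ofReal (1 + ε) *
            rearrE (wMeas (Iset a) w) (fun s => rearr (volI a) f s / ENNReal.ofReal (w s)) t := by
  have hc : 1 < ENNReal.ofReal (1 + ε) := ENNReal.one_lt_ofReal.2 (by linarith)
  obtain ⟨τ, hτ, hfτ⟩ := exists_measurePreserving_le_mul_rearrE (μ := volI a) volI_Iic_ne_top
    hf_meas.abs.ennreal_ofReal (fun _ => ENNReal.ofReal_ne_top) hβ (by rwa [volI_univ]) hc
  rw [volI_univ] at hτ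
  obtain ⟨v, hv, hv_pos, hvw⟩ := exists_measurable_pos_ae_eq (hw_meas.comp hτ.measurable)
    (hτ.quasiMeasurePreserving.ae (ae_mem_Iset.mono hw_pos))
  exact ⟨v, hv, hv_pos, fun t => rearr_eq_of_ae_eq_comp hτ hw_meas hvw, fun t =>
    rearr_div_wMeas_le (zero_lt_one.trans hc).ne' ENNReal.ofReal_ne_top
      rearrE_antitone.measurable hτ hw_meas hvw hv_pos hfτ⟩

/-- On `I=(0,∞)`, if `f*` is finite and `lim_{t→∞} f*(t) = α > 0`, then for every
`ε > 0` there is a strictly positive measurable `v` with `v* = w` a.e. and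
`(f/v)^{*,v}(t) ≤ (1+ε)·(f*/w)^{*,w}(t)` for all `t ∈ (0, ∫_I w dm)`. -/
theorem stmt_7 (w f : ℝ → ℝ)
    (hw_pos : ∀ x ∈ Iset ⊤, 0 < w x) (hw_anti : AntitoneOn w (Iset ⊤)) (hw_meas : Measurable w)
    (hf_meas : Measurable f)
    (hf_fin : ∀ t ∈ Iset ⊤, rearr (volI ⊤) f t ≠ ∞)
    (α : ℝ≥0∞) (hα : 0 < α)
    (hlim : Tendsto (fun t => rearr (volI ⊤) f t) atTop (nhds α))
    (ε : ℝ) (hε : 0 < ε) :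
    ∃ v : ℝ → ℝ, Measurable v ∧ (∀ x ∈ Iset ⊤, 0 < v x) ∧
      (∀ᵐ t ∂(volI ⊤), rearr (volI ⊤) v t = ENNReal.ofReal (w t)) ∧
      ∀ t : ℝ, 0 < t → ENNReal.ofReal t < bval ⊤ w →
        rearr (wMeas (Iset ⊤) v) (fun y => f y / v y) t
          ≤ ENNReal.ofReal (1 + ε) *
              rearrE (wMeas (Iset ⊤) w) (fun s => rearr (volI ⊤) f s / ENNReal.ofReal (w s)) t := by
  obtain ⟨v, hv, hv_pos, hvw, hfv⟩ := stmt_7_general hw_pos hw_meas hf_meas hα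
    (fun t _ => rearrE_antitone.le_of_tendsto hlim t) hε
  have hw_rearr := rearr_ae_eq_of_antitoneOn (fun x hx => (hw_pos x hx).le) hw_anti
  exact ⟨v, hv, fun x _ => hv_pos x, hw_rearr.mono fun t ht => (hvw t).trans ht,
    fun t _ _ => hfv t⟩
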